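/- Let α > 0 and 1 ≤ u < ∞, and define the alternating sequence M(n) = (−1)^n (n+1)^{−α}. Then 𝒱_u(M) < ∞ if and only if α > 1/u. -/

import Mathlib

open scoped ENNReal

/-- The `u`-variation `𝒱_u(m)` of a sequence `m : ℕ → ℂ`, as a value in `[0,∞]`. -/
noncomputable def eVar (u : ℝ) (m : ℕ → ℂ) : ℝ≥0∞ :=
  ⨆ (N : ℕ) (j : Fin (N + 1) → ℕ) (_ : StrictMono j),
    (∑ i : Fin N, (ENNReal.ofReal ‖m (j i.succ) - m (j i.castSucc)‖) ^ u) ^ (1 / u)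

/-!
In `[0, ∞]`, the `u`-variation of any sequence is controlled by its `ℓ^u` size, because each index
occurs at most twice among the increments along a string. For an alternating sequence
`(-1)^n a_n` with `a_n ≥ 0` nothing is lost: a consecutive increment has modulus
`a_{n+1} + a_n ≥ a_n`, so the string `0, 1, …, N` recovers the `ℓ^u` size. With `a_n = (n + 1)^{-α}`
the question becomes the convergence of the `p`-series with `p = α u`.
-/

section RpowSums

variable {ι E : Type*} [SeminormedAddGroup E] {u : ℝ}

theorem tsum_enorm_rpow_lt_top_iff_summable_norm_rpow (hu : 0 ≤ u) (f : ι → E) :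
    ∑' i, ‖f i‖ₑ ^ u < ∞ ↔ Summable fun i => ‖f i‖ ^ u := by
  simp only [lt_top_iff_ne_top, enorm_eq_nnnorm, ← ENNReal.coe_rpow_of_nonneg _ hu,
    ENNReal.tsum_coe_ne_top_iff_summable, ← NNReal.summable_coe, NNReal.coe_rpow, coe_nnnorm]

theorem enorm_sub_rpow_le (hu : 0 ≤ u) (a b : E) :
    ‖a - b‖ₑ ^ u ≤ ENNReal.LpAddConst (ENNReal.ofReal u)⁻¹ * (‖a‖ₑ ^ u + ‖b‖ₑ ^ u) :=
  (ENNReal.rpow_le_rpow (enorm_sub_le (a := a) (b := b)) hu).trans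
    (ENNReal.rpow_add_le_mul_rpow_add_rpow' _ _ hu)

theorem sum_enorm_sub_rpow_le_tsum (hu : 0 ≤ u) (f : ι → E) {N : ℕ} {j : Fin (N + 1) → ι}
    (hj : Function.Injective j) :
    ∑ i : Fin N, ‖f (j i.succ) - f (j i.castSucc)‖ₑ ^ u ≤
      ENNReal.LpAddConst (ENNReal.ofReal u)⁻¹ * (2 * ∑' i, ‖f i‖ₑ ^ u) := by
  have sum_le_tsum {k : Fin N → ι} (hk : Function.Injective k) :
      ∑ i, ‖f (k i)‖ₑ ^ u ≤ ∑' i, ‖f i‖ₑ ^ u := by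
    rw [← tsum_fintype (L := .unconditional _)]
    exact ENNReal.tsum_comp_le_tsum_of_injective hk fun i => ‖f i‖ₑ ^ u
  calc ∑ i : Fin N, ‖f (j i.succ) - f (j i.castSucc)‖ₑ ^ u
    _ ≤ ∑ i : Fin N, ENNReal.LpAddConst (ENNReal.ofReal u)⁻¹ *
          (‖f (j i.succ)‖ₑ ^ u + ‖f (j i.castSucc)‖ₑ ^ u) := by
        gcongr
        exact enorm_sub_rpow_le hu _ _
    _ = ENNReal.LpAddConst (ENNReal.ofReal u)⁻¹ *
          (∑ i : Fin N, ‖f (j i.succ)‖ₑ ^ u + ∑ i : Fin N, ‖f (j i.castSucc)‖ₑ ^ u) := by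
        rw [← Finset.mul_sum, Finset.sum_add_distrib]
    _ ≤ ENNReal.LpAddConst (ENNReal.ofReal u)⁻¹ * (2 * ∑' i, ‖f i‖ₑ ^ u) := by
        rw [two_mul]
        gcongr
        · exact sum_le_tsum (hj.comp (Fin.succ_injective N))
        · exact sum_le_tsum (hj.comp (Fin.castSucc_injective N))

end RpowSums

section Variation

variable {u : ℝ} {m : ℕ → ℂ}

theorem eVar_le_iff (hu : 0 < u) {C : ℝ≥0∞} :
    eVar u m ≤ C ↔ ∀ (N : ℕ) (j : Fin (N + 1) → ℕ), StrictMono j →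
      ∑ i : Fin N, ‖m (j i.succ) - m (j i.castSucc)‖ₑ ^ u ≤ C ^ u := by
  simp only [eVar, iSup_le_iff, one_div, ENNReal.rpow_inv_le_iff hu, ofReal_norm]

theorem tsum_enorm_sub_rpow_le_eVar_rpow (hu : 0 < u) :
    ∑' n, ‖m (n + 1) - m n‖ₑ ^ u ≤ eVar u m ^ u := by
  refine ENNReal.tsum_le_of_sum_range_le fun N => ?_
  rw [Finset.sum_range]
  exact (eVar_le_iff hu).1 le_rfl N (fun i => i) Fin.val_strictMono

theorem eVar_le_tsum_enorm_rpow (hu : 0 < u) :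
    eVar u m ≤
      (ENNReal.LpAddConst (ENNReal.ofReal u)⁻¹ * (2 * ∑' n, ‖m n‖ₑ ^ u)) ^ (1 / u) := by
  refine (eVar_le_iff hu).2 fun N j hj => ?_
  rw [one_div, ENNReal.rpow_inv_rpow hu.ne']
  exact sum_enorm_sub_rpow_le_tsum hu.le m hj.injective

theorem eVar_lt_top_of_summable_norm_rpow (hu : 0 < u) (hm : Summable fun n => ‖m n‖ ^ u) :
    eVar u m < ∞ := by
  have tsum_lt_top := (tsum_enorm_rpow_lt_top_iff_summable_norm_rpow hu.le m).2 hm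
  refine (eVar_le_tsum_enorm_rpow hu).trans_lt
    (ENNReal.rpow_lt_top_of_nonneg (one_div_nonneg.2 hu.le) (ENNReal.mul_lt_top ?_ ?_).ne)
  · exact ENNReal.LpAddConst_lt_top _
  · exact ENNReal.mul_lt_top ENNReal.ofNat_lt_top tsum_lt_top

theorem summable_norm_sub_rpow_of_eVar_lt_top (hu : 0 < u) (hm : eVar u m < ∞) :
    Summable fun n => ‖m (n + 1) - m n‖ ^ u :=
  (tsum_enorm_rpow_lt_top_iff_summable_norm_rpow hu.le fun n => m (n + 1) - m n).1
    ((tsum_enorm_sub_rpow_le_eVar_rpow hu).trans_lt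
      (ENNReal.rpow_lt_top_of_nonneg hu.le hm.ne))

end Variation

section Alternating

theorem norm_neg_one_pow_mul_ofReal {x : ℝ} (hx : 0 ≤ x) (n : ℕ) : ‖(-1 : ℂ) ^ n * x‖ = x := by
  rw [norm_mul, norm_pow, norm_neg, norm_one, one_pow, one_mul, Complex.norm_of_nonneg hx]

theorem norm_alternating_succ_sub {a : ℕ → ℝ} (ha : ∀ n, 0 ≤ a n) (n : ℕ) :
    ‖(-1 : ℂ) ^ (n + 1) * a (n + 1) - (-1) ^ n * a n‖ = a (n + 1) + a n := by
  have sub_eq : (-1 : ℂ) ^ (n + 1) * a (n + 1) - (-1) ^ n * a n =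
      (-1) ^ (n + 1) * ((a (n + 1) + a n : ℝ) : ℂ) := by
    push_cast
    ring
  rw [sub_eq, norm_neg_one_pow_mul_ofReal (add_nonneg (ha (n + 1)) (ha n))]

theorem eVar_alternating_lt_top_iff {u : ℝ} (hu : 0 < u) {a : ℕ → ℝ} (ha : ∀ n, 0 ≤ a n) :
    eVar u (fun n => (-1) ^ n * a n) < ∞ ↔ Summable fun n => a n ^ u := by
  constructor
  · intro h
    have summable_sub := summable_norm_sub_rpow_of_eVar_lt_top hu h
    simp only [norm_alternating_succ_sub ha] at summable_sub
    exact summable_sub.of_nonneg_of_le (fun n => Real.rpow_nonneg (ha n) u) fun n =>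
      Real.rpow_le_rpow (ha n) (le_add_of_nonneg_left (ha (n + 1))) hu.le
  · intro h
    apply eVar_lt_top_of_summable_norm_rpow hu
    simpa only [norm_neg_one_pow_mul_ofReal (ha _)] using h

end Alternating

theorem summable_nat_add_one_rpow_neg_rpow_iff {α u : ℝ} (hu : 0 < u) :
    Summable (fun n : ℕ => (((n : ℝ) + 1) ^ (-α)) ^ u) ↔ 1 / u < α := by
  have rpow_eq (n : ℕ) : (((n : ℝ) + 1) ^ (-α)) ^ u = ((n + 1 : ℕ) : ℝ) ^ (-α * u) := by
    rw [← Real.rpow_mul (by positivity), Nat.cast_add_one]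
  simp only [rpow_eq]
  rw [summable_nat_add_iff (f := fun n : ℕ => (n : ℝ) ^ (-α * u)) 1, Real.summable_nat_rpow,
    neg_mul, neg_lt_neg_iff, div_lt_iff₀ hu]

theorem haar_stmt14_general (α u : ℝ) (hu : 0 < u) (M : ℕ → ℂ)
    (hM : ∀ n : ℕ, M n = (-1 : ℂ) ^ n * (((((n : ℝ) + 1) ^ (-α) : ℝ)) : ℂ)) :
    eVar u M < ∞ ↔ 1 / u < α := by
  have rpow_nonneg (n : ℕ) : 0 ≤ ((n : ℝ) + 1) ^ (-α) := by positivity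
  rw [funext hM, eVar_alternating_lt_top_iff hu rpow_nonneg,
    summable_nat_add_one_rpow_neg_rpow_iff hu]

/-- For `α > 0` and `1 ≤ u < ∞`, the alternating sequence
`M n = (-1)^n (n+1)^{-α}` has `𝒱_u(M) < ∞` if and only if `α > 1/u`. -/
theorem haar_stmt14 (α u : ℝ) (hα : 0 < α) (hu : 1 ≤ u) (M : ℕ → ℂ)
    (hM : ∀ n : ℕ, M n = (-1 : ℂ) ^ n * (((((n : ℝ) + 1) ^ (-α) : ℝ)) : ℂ)) :
    eVar u M < ∞ ↔ 1 / u < α :=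
  haar_stmt14_general α u (zero_lt_one.trans_le hu) M hM
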